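/- Max-information of classical-quantum states: let I be a finite set, p_i > 0 for i ∈ I, and ρ^i_AB sub-normalized states on H_A ⊗ H_B such that ρ_ABI = ∑_{i∈I} p_i ρ^i_AB ⊗ |i⟩⟨i| is a sub-normalized state on H_A ⊗ H_B ⊗ C^{|I|} (with {|i⟩} the standard basis of C^{|I|}). Then I_max(AI:B)_ρ ≥ max_{i∈I} I_max(A:B)_{ρ^i}, where on the left-hand side the first system is H_A ⊗ C^{|I|} and the second system is H_B. -/

import Mathlib

open scoped Kronecker ComplexOrder
open Matrix

noncomputable section

/-- Partial trace over the right tensor factor. -/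
def ptraceRight {α β : Type*} [Fintype β] (M : Matrix (α × β) (α × β) ℂ) : Matrix α α ℂ :=
  Matrix.of fun i j => ∑ b, M (i, b) (j, b)

/-- The max-information `I_max(A:B)_ρ = inf_{σ_B state} D_max(ρ_AB ‖ ρ_A ⊗ σ_B)`, written
as a single base-2 logarithm of a joint infimum over `λ ≥ 0` and states `σ_B` with
`ρ_AB ≤ λ (ρ_A ⊗ σ_B)` in the Loewner order. -/
def Imax {α β : Type*} [Fintype α] [Fintype β] [DecidableEq α] [DecidableEq β]
    (ρ : Matrix (α × β) (α × β) ℂ) : ℝ :=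
  Real.logb 2 (sInf {lam : ℝ | 0 ≤ lam ∧ ∃ σ : Matrix β β ℂ, σ.PosSemidef ∧ σ.trace = 1 ∧
    (lam • (ptraceRight ρ ⊗ₖ σ) - ρ).PosSemidef})

/-- The set whose infimum defines `Imax`. -/
def imaxSet {α β : Type*} [Fintype α] [Fintype β] [DecidableEq α] [DecidableEq β]
    (ρ : Matrix (α × β) (α × β) ℂ) : Set ℝ :=
  {lam : ℝ | 0 ≤ lam ∧ ∃ σ : Matrix β β ℂ, σ.PosSemidef ∧ σ.trace = 1 ∧
    (lam • (ptraceRight ρ ⊗ₖ σ) - ρ).PosSemidef}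

lemma diag_conj {n : Type*} [Fintype n] [DecidableEq n] {M : Matrix n n ℂ} (hM : M.PosSemidef)
    (f : n → ℝ) : (Matrix.of fun i j => (f i : ℂ) * M i j * (f j : ℂ)).PosSemidef := by
  have h := hM.mul_mul_conjTranspose_same (Matrix.diagonal fun i => (f i : ℂ))
  convert h using 1
  ext i j
  simp [Matrix.diagonal_conjTranspose, Matrix.mul_diagonal, Matrix.diagonal_mul]

lemma pinch_bound {α β : Type*} [Fintype α] [Fintype β] [DecidableEq α] [DecidableEq β]
    {ρ : Matrix (α × β) (α × β) ℂ} (h : ρ.PosSemidef) :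
    ((Fintype.card β : ℝ) • (ptraceRight ρ ⊗ₖ (1 : Matrix β β ℂ)) - ρ).PosSemidef := by
  have h1 : (∑ b : β, ∑ b' : β, Matrix.of fun i j : α × β =>
      ((((if i.2 = b then 1 else 0) - (if i.2 = b' then 1 else 0) : ℝ) : ℂ) * ρ i j *
       (((if j.2 = b then 1 else 0) - (if j.2 = b' then 1 else 0) : ℝ) : ℂ))).PosSemidef :=
    Matrix.posSemidef_sum _ fun b _ => Matrix.posSemidef_sum _ fun b' _ =>
      diag_conj h (fun i => (if i.2 = b then 1 else 0) - (if i.2 = b' then 1 else 0))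
  have h2 : (∑ b : β, ∑ y : β, Matrix.of fun i j : α × β =>
      ((((if i.2 = b ∧ b ≠ y then 1 else 0) : ℝ) : ℂ) * ρ (i.1, y) (j.1, y) *
       (((if j.2 = b ∧ b ≠ y then 1 else 0) : ℝ) : ℂ))).PosSemidef :=
    Matrix.posSemidef_sum _ fun b _ => Matrix.posSemidef_sum _ fun y _ =>
      diag_conj (h.submatrix (fun i : α × β => (i.1, y)))
        (fun i => (if i.2 = b ∧ b ≠ y then 1 else 0))
  have h3 := (h1.smul (show (0 : ℝ) ≤ 1 / 2 by norm_num)).add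
    (h2.smul (show (0 : ℝ) ≤ (Fintype.card β : ℝ) by positivity))
  convert h3 using 1
  ext ⟨a, x⟩ ⟨a', x'⟩
  have e1 : (∑ b : β, ∑ b' : β,
      ((((if x = b then 1 else 0) - (if x = b' then 1 else 0) : ℝ) : ℂ) * ρ (a, x) (a', x') *
       (((if x' = b then 1 else 0) - (if x' = b' then 1 else 0) : ℝ) : ℂ)))
      = ρ (a, x) (a', x') * (2 * Fintype.card β * (if x = x' then 1 else 0) - 2) := by
    have e : ∀ b b' : β,
      ((((if x = b then 1 else 0) - (if x = b' then 1 else 0) : ℝ) : ℂ) * ρ (a, x) (a', x') *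
       (((if x' = b then 1 else 0) - (if x' = b' then 1 else 0) : ℝ) : ℂ))
       = ρ (a, x) (a', x') * (((if x = b then 1 else 0) * (if x' = b then 1 else 0)
        - (if x = b then 1 else 0) * (if x' = b' then 1 else 0))
        + ((if x = b' then 1 else 0) * (if x' = b' then 1 else 0)
        - (if x' = b then 1 else 0) * (if x = b' then 1 else 0))) := by
      intro b b'
      split_ifs <;> push_cast <;> ring
    simp_rw [e, ← Finset.mul_sum, Finset.sum_add_distrib, Finset.sum_sub_distrib,
      ← Finset.mul_sum]
    congr 1
    by_cases hx : x = x'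
    · subst hx
      simp
      ring
    · simp [hx, Ne.symm hx]
      norm_num
  have e2 : (∑ b : β, ∑ y : β,
      ((((if x = b ∧ b ≠ y then 1 else 0) : ℝ) : ℂ) * ρ (a, y) (a', y) *
       (((if x' = b ∧ b ≠ y then 1 else 0) : ℝ) : ℂ)))
      = (if x = x' then 1 else 0) * (∑ y, ρ (a, y) (a', y) - ρ (a, x) (a', x')) := by
    rw [Finset.sum_eq_single x]
    · by_cases hx : x = x'
      · subst hx
        have e : ∀ y : β, ((((if x = x ∧ x ≠ y then 1 else 0) : ℝ) : ℂ) * ρ (a, y) (a', y) *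
            (((if x = x ∧ x ≠ y then 1 else 0) : ℝ) : ℂ))
            = ρ (a, y) (a', y) - if x = y then ρ (a, y) (a', y) else 0 := by
          intro y
          by_cases hy : x = y <;> simp [hy]
        rw [Finset.sum_congr rfl fun y _ => e y, Finset.sum_sub_distrib]
        simp
      · simp [hx, Ne.symm hx]
    · intro b _ hb
      simp [Ne.symm hb]
    · simp
  simp only [Matrix.add_apply, Matrix.smul_apply, Matrix.sum_apply, Matrix.sub_apply,
    Matrix.of_apply]
  rw [e1, e2]
  by_cases hx : x = x'
  · subst hx
    simp [ptraceRight]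
    ring
  · simp [hx]
    ring

lemma imaxSet_nonempty {α β : Type*} [Fintype α] [Fintype β] [DecidableEq α] [DecidableEq β]
    [Nonempty β] {ρ : Matrix (α × β) (α × β) ℂ} (h : ρ.PosSemidef) :
    (imaxSet ρ).Nonempty := by
  have hc : (0 : ℝ) < Fintype.card β := by exact_mod_cast Fintype.card_pos
  have hc' : (Fintype.card β : ℂ) ≠ 0 := by exact_mod_cast hc.ne'
  refine ⟨(Fintype.card β : ℝ) * Fintype.card β, by positivity,
    ((Fintype.card β : ℝ)⁻¹) • 1, Matrix.PosSemidef.one.smul (by positivity), ?_, ?_⟩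
  · simp [Matrix.trace_smul, hc']
  · have := pinch_bound h
    rwa [Matrix.kronecker_smul, smul_smul, mul_assoc, mul_inv_cancel₀ hc.ne', mul_one]

lemma one_le_of_mem {α β : Type*} [Fintype α] [Fintype β] [DecidableEq α] [DecidableEq β]
    {ρ : Matrix (α × β) (α × β) ℂ} (h : ρ.PosSemidef) (h0 : ρ ≠ 0) {l : ℝ}
    (hl : l ∈ imaxSet ρ) : 1 ≤ l := by
  obtain ⟨_, σ, _, hσ, hP⟩ := hl
  have ht : (ptraceRight ρ).trace = ρ.trace := by
    simp [ptraceRight, Matrix.trace, Fintype.sum_prod_type]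
  have h1 := hP.trace_nonneg
  rw [Matrix.trace_sub, Matrix.trace_smul, Matrix.trace_kronecker, hσ, mul_one, ht] at h1
  have h2 := h.trace_nonneg
  have h3 : ρ.trace ≠ 0 := fun e => h0 (h.trace_eq_zero_iff.mp e)
  rw [Complex.le_def] at h1 h2
  have h4 : ρ.trace.re ≠ 0 := fun e => h3 (Complex.ext e h2.2.symm)
  have h5 : 0 < ρ.trace.re := lt_of_le_of_ne h2.1 (Ne.symm h4)
  have h6 := h1.1
  simp at h6
  nlinarith

/-- **Max-information of classical-quantum states**: for
`ρ_{ABI} = Σ_i p_i ρ^i_{AB} ⊗ |i⟩⟨i|` (written on `(A ⊗ I) ⊗ B` via its entries),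
`I_max(AI:B)_ρ ≥ max_i I_max(A:B)_{ρ^i}`. -/
theorem imax_cq_states
    {A B : Type*} [Fintype A] [Fintype B] [DecidableEq A] [DecidableEq B]
    (L : ℕ) (p : Fin L → ℝ) (hp : ∀ i, 0 < p i)
    (ρi : Fin L → Matrix (A × B) (A × B) ℂ)
    (hρi : ∀ i, (ρi i).PosSemidef ∧ (ρi i).trace.re ≤ 1)
    (τ : Matrix ((A × Fin L) × B) ((A × Fin L) × B) ℂ)
    (hτ : ∀ (a : A) (i : Fin L) (x : B) (a' : A) (i' : Fin L) (x' : B),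
      τ ((a, i), x) ((a', i'), x') =
        if i = i' then (p i : ℂ) * ρi i (a, x) (a', x') else 0)
    (hτsub : τ.PosSemidef ∧ τ.trace.re ≤ 1) :
    ∀ i, Imax (ρi i) ≤ Imax τ := by
  intro i
  change Real.logb 2 (sInf (imaxSet (ρi i))) ≤ Real.logb 2 (sInf (imaxSet τ))
  have hsub : imaxSet τ ⊆ imaxSet (ρi i) := by
    rintro l ⟨hl, σ, hσ, hσt, hP⟩
    refine ⟨hl, σ, hσ, hσt, ?_⟩
    have h1 := (hP.submatrix (fun q : A × B => ((q.1, i), q.2))).smul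
      (inv_nonneg.mpr (hp i).le)
    have hpi : (p i : ℂ) ≠ 0 := by exact_mod_cast (hp i).ne'
    convert h1 using 1
    ext ⟨a, x⟩ ⟨a', x'⟩
    simp [ptraceRight, hτ, ← Finset.mul_sum]
    field_simp
  rcases isEmpty_or_nonempty B with hB | hB
  · have hE : imaxSet (ρi i) = ∅ := by
      ext l
      simp [imaxSet, Matrix.trace]
    have hE' : imaxSet τ = ∅ := by
      ext l
      simp [imaxSet, Matrix.trace]
    rw [hE, hE']
  have hne := imaxSet_nonempty hτsub.1
  have hbdd : BddBelow (imaxSet (ρi i)) := ⟨0, fun l hl => hl.1⟩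
  have hle := csInf_le_csInf hbdd hne hsub
  have h0 : 0 ≤ sInf (imaxSet (ρi i)) := Real.sInf_nonneg fun l hl => hl.1
  rcases h0.lt_or_eq with hpos | hz
  · exact Real.logb_le_logb_of_le (by norm_num) hpos hle
  · rw [← hz, Real.logb_zero]
    by_cases ht : τ = 0
    · have hmem : (0 : ℝ) ∈ imaxSet τ := by
        obtain ⟨l, hl, σ, hσ, hσt, _⟩ := hne
        refine ⟨le_rfl, σ, hσ, hσt, ?_⟩
        rw [ht]
        simpa using Matrix.PosSemidef.zero
      have : sInf (imaxSet τ) = 0 :=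
        le_antisymm (csInf_le ⟨0, fun l hl => hl.1⟩ hmem) (Real.sInf_nonneg fun l hl => hl.1)
      rw [this, Real.logb_zero]
    · exact Real.logb_nonneg (by norm_num)
        (le_csInf hne fun l hl => one_le_of_mem hτsub.1 ht hl)
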